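/- There is a universal constant C > 0 with the following property. Let s ↦ H(s) be a differentiable family of Hermitian operators on a finite-dimensional complex Hilbert space such that for every s the spectrum of H(s) decomposes as Σ(s) ∪ Σ'(s) with Σ(s) ⊂ [a,b] and dist(Σ'(s), [a,b]) ≥ γ for fixed a ≤ b and γ > 0, and let P(s) be the spectral projection of H(s) onto Σ(s), assumed differentiable in s. Then ‖Ṗ(s)‖ ≤ C ‖Ḣ(s)‖ / γ for all s, where ‖·‖ is the operator norm. -/

import Mathlib

lemma sylv_bound {A : Type*} [NormedRing A] (R D E F : A) (r γ h : ℝ) (hr : 0 ≤ r) (hγ : 0 < γ)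
    (hX : D = R * (D * F - E)) (hF : ‖F‖ ≤ r) (hR : ‖R‖ ≤ (r + γ)⁻¹) (hE : ‖E‖ ≤ h) :
    γ * ‖D‖ ≤ h := by
  have h1 : ‖D‖ ≤ (r + γ)⁻¹ * (‖D‖ * r + h) := by
    calc ‖D‖ = ‖R * (D * F - E)‖ := by rw [← hX]
      _ ≤ ‖R‖ * (‖D * F‖ + ‖E‖) :=
        (norm_mul_le _ _).trans (by gcongr; exact norm_sub_le _ _)
      _ ≤ (r + γ)⁻¹ * (‖D‖ * r + h) := by
        gcongr
        exact (norm_mul_le _ _).trans (by gcongr)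
  have h2 : (r + γ) * ‖D‖ ≤ ‖D‖ * r + h := by
    have h3 : 0 < r + γ := by linarith
    rwa [inv_mul_eq_div, le_div_iff₀ h3, mul_comm] at h1
  linarith

lemma sylv_bound' {A : Type*} [NormedRing A] (R D E F : A) (r γ h : ℝ) (hr : 0 ≤ r) (hγ : 0 < γ)
    (hX : D = (F * D + E) * R) (hF : ‖F‖ ≤ r) (hR : ‖R‖ ≤ (r + γ)⁻¹) (hE : ‖E‖ ≤ h) :
    γ * ‖D‖ ≤ h := by
  have h1 : ‖D‖ ≤ (r * ‖D‖ + h) * (r + γ)⁻¹ := by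
    calc ‖D‖ = ‖(F * D + E) * R‖ := by rw [← hX]
      _ ≤ (‖F * D‖ + ‖E‖) * ‖R‖ :=
        (norm_mul_le _ _).trans (by gcongr; exact norm_add_le (F * D) E)
      _ ≤ (r * ‖D‖ + h) * (r + γ)⁻¹ := by
        have hh : 0 ≤ h := (norm_nonneg _).trans hE
        have : 0 ≤ r * ‖D‖ + h := by positivity
        gcongr
        exact (norm_mul_le F D).trans (mul_le_mul_of_nonneg_right hF (norm_nonneg _))
  have h2 : (r + γ) * ‖D‖ ≤ r * ‖D‖ + h := by
    have h3 : 0 < r + γ := by linarith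
    rwa [← div_eq_mul_inv, le_div_iff₀ h3, mul_comm] at h1
  linarith

lemma ring_bound {A : Type*} [NormedRing A] (P Q K R D H' : A) (r γ : ℝ) (hr : 0 ≤ r) (hγ : 0 < γ)
    (hPQ : P + Q = 1) (hP : P * P = P) (hKP : K * P = P * K) (hRK : R * K = Q) (hKR : K * R = Q)
    (hD : D = D * P + P * D) (hC : H' * P + K * D = D * K + P * H')
    (nP : ‖P‖ ≤ 1) (nQ : ‖Q‖ ≤ 1) (nK : ‖K * P‖ ≤ r) (nR : ‖R‖ ≤ (r + γ)⁻¹) :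
    ‖D‖ ≤ 2 * ‖H'‖ / γ := by
  have eQ : Q = 1 - P := by rw [← hPQ]; abel
  have hQP : Q * P = 0 := by rw [eQ, sub_mul, hP]; simp
  have hPQ0 : P * Q = 0 := by rw [eQ, mul_sub, hP]; simp
  have hQQ : Q * Q = Q := by
    calc Q * Q = (1 - P) * Q := by rw [← eQ]
      _ = Q := by rw [sub_mul, hPQ0]; simp
  have hKQ : K * Q = Q * K := by rw [eQ, mul_sub, sub_mul, hKP]; simp
  have hC1 : K * D = D * K + P * H' - H' * P := by rw [← hC]; abel
  have hC2 : D * K = K * D + H' * P - P * H' := by rw [hC1]; abel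
  have bd : ∀ x y : A, ‖x‖ ≤ 1 → ‖y‖ ≤ 1 → ‖x * H' * y‖ ≤ ‖H'‖ := fun x y hx hy => by
    calc ‖x * H' * y‖ ≤ ‖x‖ * ‖H'‖ * ‖y‖ := (norm_mul_le _ _).trans (by gcongr; exact norm_mul_le _ _)
      _ ≤ 1 * ‖H'‖ * 1 := by gcongr
      _ = ‖H'‖ := by ring
  have hDP : D * P = Q * D := by
    rw [eQ, sub_mul, one_mul, eq_sub_iff_add_eq]; exact hD.symm
  have hDQ : D * Q = P * D := by
    rw [eQ, mul_sub, mul_one, sub_eq_iff_eq_add, add_comm]; exact hD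
  have hsum : D = Q * D * P + P * D * Q := by
    rw [← hDP, ← hDQ, mul_assoc, mul_assoc, hP, hQQ, ← mul_add, hPQ, mul_one]
  have b1 : γ * ‖Q * D * P‖ ≤ ‖H'‖ := by
    refine sylv_bound R (Q * D * P) (Q * H' * P) (K * P) r γ _ hr hγ ?_ nK nR (bd _ _ nQ nP)
    have e : K * (Q * D * P) = Q * D * P * (K * P) - Q * H' * P := by
      calc K * (Q * D * P) = (K * Q) * D * P := by noncomm_ring
        _ = Q * (K * D) * P := by rw [hKQ]; noncomm_ring
        _ = Q * D * (K * P) + (Q * P) * H' * P - Q * H' * (P * P) := by rw [hC1]; noncomm_ring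
        _ = Q * D * (K * P) - Q * H' * P := by rw [hQP, hP]; simp
        _ = Q * D * ((P * P) * K) - Q * H' * P := by rw [hP, hKP]
        _ = Q * D * P * (K * P) - Q * H' * P := by rw [hKP]; noncomm_ring
    rw [← e, ← mul_assoc, hRK, ← mul_assoc, ← mul_assoc, hQQ]
  have b2 : γ * ‖P * D * Q‖ ≤ ‖H'‖ := by
    refine sylv_bound' R (P * D * Q) (-(P * H' * Q)) (K * P) r γ _ hr hγ ?_ nK nR
      (by rw [norm_neg]; exact bd _ _ nP nQ)
    have e : (P * D * Q) * K = (K * P) * (P * D * Q) + -(P * H' * Q) := by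
      calc (P * D * Q) * K = P * D * (Q * K) := by noncomm_ring
        _ = P * (D * K) * Q := by rw [← hKQ]; noncomm_ring
        _ = (P * K) * D * Q + P * H' * (P * Q) - (P * P) * H' * Q := by rw [hC2]; noncomm_ring
        _ = (P * K) * D * Q - P * H' * Q := by rw [hPQ0, hP]; simp
        _ = (K * (P * P)) * D * Q - P * H' * Q := by rw [hP, hKP]
        _ = (K * P) * (P * D * Q) + -(P * H' * Q) := by noncomm_ring
    rw [← e, mul_assoc (P * D * Q), hKR, mul_assoc (P * D), hQQ]
  rw [le_div_iff₀ hγ]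
  have := norm_add_le (Q * D * P) (P * D * Q)
  rw [← hsum] at this
  nlinarith

lemma spec_finite {V : Type*} [NormedAddCommGroup V] [InnerProductSpace ℂ V]
    [FiniteDimensional ℂ V] (T : V →L[ℂ] V) : (spectrum ℝ T).Finite := by
  have h : (spectrum ℂ T).Finite := by
    have h1 := Module.End.finite_spectrum (K := ℂ) (T : V →ₗ[ℂ] V)
    have : CompleteSpace V := FiniteDimensional.complete ℂ V
    rwa [ContinuousLinearMap.spectrum_eq]
  rw [← spectrum.preimage_algebraMap ℂ]
  exact h.preimage (FaithfulSMul.algebraMap_injective ℝ ℂ).injOn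

/-- There is a universal constant `C > 0` such that for any differentiable family of
Hermitian operators `H s` on a finite-dimensional complex Hilbert space whose spectrum
decomposes as `S s ∪ S' s` with `S s ⊆ [a,b]` and `dist (S' s, [a,b]) ≥ γ > 0`, the
spectral projection `P s` of `H s` onto `S s` (assumed differentiable) satisfies
`‖Ṗ s‖ ≤ C ‖Ḣ s‖ / γ`. -/
theorem stmt_4.{u} :
    ∃ C : ℝ, 0 < C ∧
      ∀ (𝓗 : Type u) [NormedAddCommGroup 𝓗] [InnerProductSpace ℂ 𝓗]
        [FiniteDimensional ℂ 𝓗]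
        (a b γ : ℝ), a ≤ b → 0 < γ →
      ∀ (H H' P P' : ℝ → 𝓗 →L[ℂ] 𝓗) (S S' : ℝ → Set ℝ),
        (∀ s, IsSelfAdjoint (H s)) →
        (∀ s, HasDerivAt H (H' s) s) →
        (∀ s, spectrum ℝ (H s) = S s ∪ S' s) →
        (∀ s, S s ⊆ Set.Icc a b) →
        (∀ s, ∀ x ∈ S' s, ∀ y ∈ Set.Icc a b, γ ≤ |x - y|) →
        (∀ s, P s = cfc (Set.indicator (S s) fun _ => (1:ℝ)) (H s)) →
        (∀ s, HasDerivAt P (P' s) s) →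
        ∀ s, ‖P' s‖ ≤ C * ‖H' s‖ / γ := by
  classical
  refine ⟨2, two_pos, ?_⟩
  intro 𝓗 _ _ _ a b γ hab hγ H H' P P' S S' hsa hH hspec hS hS' hP hP' s
  have : CompleteSpace 𝓗 := FiniteDimensional.complete ℂ 𝓗
  have cont : ∀ t, ∀ f : ℝ → ℝ, ContinuousOn f (spectrum ℝ (H t)) :=
    fun t f => (spec_finite (H t)).continuousOn f
  have hPP : ∀ t, P t * P t = P t := fun t => by
    rw [hP t, ← cfc_mul _ _ (H t) (cont t _) (cont t _)]
    congr 1; ext x; by_cases hx : x ∈ S t <;> simp [hx]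
  have hHP : ∀ t, H t * P t = P t * H t := fun t => by
    rw [hP t]
    have h := (cfc_commute_cfc (R := ℝ) (fun x => x) (Set.indicator (S t) fun _ => (1:ℝ)) (H t)).eq
    rwa [cfc_id' ℝ (H t) (hsa t)] at h
  have hD : P' s = P' s * P s + P s * P' s := by
    have h1 := (hP' s).mul (hP' s)
    have h2 : P * P = P := funext hPP
    rw [h2] at h1
    exact (hP' s).unique h1
  have hC0 : H' s * P s + H s * P' s = P' s * H s + P s * H' s := by
    have h1 := (hH s).mul (hP' s)
    have h2 := (hP' s).mul (hH s)
    have h3 : H * P = P * H := funext hHP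
    rw [h3] at h1
    exact h1.unique h2
  set c : ℝ := (a + b) / 2 with hc
  set K : 𝓗 →L[ℂ] 𝓗 := cfc (fun x : ℝ => x - c) (H s) with hK
  have hKH : K = H s - algebraMap ℝ _ c := by
    rw [hK, cfc_sub (fun x : ℝ => x) (fun _ => c) (H s) (cont s _) (cont s _),
      cfc_id' ℝ (H s) (hsa s), cfc_const c (H s) (hsa s)]
  have hdisj : ∀ x ∈ spectrum ℝ (H s), x ∉ S s → (b - a) / 2 + γ ≤ |x - c| := by
    intro x hx hxS
    have hx' : x ∈ S' s := by
      rw [hspec s] at hx; exact hx.resolve_left hxS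
    have h1 := hS' s x hx' a ⟨le_rfl, hab⟩
    have h2 := hS' s x hx' b ⟨hab, le_rfl⟩
    by_cases h3 : x ≤ a
    · rw [abs_of_nonpos (by linarith)] at h1
      rw [abs_of_nonpos (by linarith)]; linarith
    · by_cases h4 : b ≤ x
      · rw [abs_of_nonneg (by linarith)] at h2
        rw [abs_of_nonneg (by linarith)]; linarith
      · have h5 := hS' s x hx' x ⟨by linarith, by linarith⟩
        simp at h5; linarith
  have hr : 0 ≤ (b - a) / 2 := by linarith
  refine ring_bound (P s) (cfc (fun x : ℝ => if x ∈ S s then (0:ℝ) else 1) (H s)) K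
    (cfc (fun x : ℝ => if x ∈ S s then (0:ℝ) else (x - c)⁻¹) (H s)) (P' s) (H' s)
    ((b - a) / 2) γ hr hγ ?_ (hPP s) ?_ ?_ ?_ hD ?_ ?_ ?_ ?_ ?_
  · rw [hP s, ← cfc_add _ _ _ (cont s _) (cont s _), ← cfc_one ℝ (H s) (hsa s)]
    congr 1; ext x; by_cases hx : x ∈ S s <;> simp [hx]
  · rw [hP s]; exact (cfc_commute_cfc _ _ (H s)).eq
  · rw [hK, ← cfc_mul _ _ _ (cont s _) (cont s _)]
    apply cfc_congr
    intro x hx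
    by_cases hxS : x ∈ S s
    · simp [hxS]
    · have := hdisj x hx hxS
      have h0 : x - c ≠ 0 := abs_pos.mp (by linarith)
      simp [hxS, h0]
  · rw [hK, ← cfc_mul _ _ _ (cont s _) (cont s _)]
    apply cfc_congr
    intro x hx
    by_cases hxS : x ∈ S s
    · simp [hxS]
    · have := hdisj x hx hxS
      have h0 : x - c ≠ 0 := abs_pos.mp (by linarith)
      simp [hxS, h0]
  · rw [hKH, sub_mul, mul_sub, ← Algebra.commutes c (P' s), ← add_sub_assoc, hC0]; abel
  · rw [hP s]
    refine norm_cfc_le zero_le_one fun x hx => ?_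
    by_cases hxS : x ∈ S s <;> simp [hxS]
  · refine norm_cfc_le zero_le_one fun x hx => ?_
    by_cases hxS : x ∈ S s <;> simp [hxS]
  · rw [hK, hP s, ← cfc_mul _ _ _ (cont s _) (cont s _)]
    refine norm_cfc_le hr fun x hx => ?_
    by_cases hxS : x ∈ S s
    · have := hS s hxS
      simp only [hxS, Set.indicator_of_mem, mul_one, Real.norm_eq_abs]
      rw [abs_le]; constructor <;> linarith [this.1, this.2]
    · simpa [hxS] using hr
  · refine norm_cfc_le (by positivity) fun x hx => ?_
    by_cases hxS : x ∈ S s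
    · simp only [hxS, if_true, norm_zero]; positivity
    · simp only [hxS, if_false, norm_inv, Real.norm_eq_abs]
      exact inv_anti₀ (by positivity) (hdisj x hx hxS)
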